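/- Assume ℓ(C) = 0, i.e. e_j ≥ 2 for all j. If ℓ_1, ..., ℓ_{m−1} and ℓ are homogeneous linear forms in S (elements of S of degree 1, possibly zero) satisfying Σ_{j=1}^{m−1} ℓ_j ρ_j + ∇f × ∇ℓ = 0 in S³, then ℓ_1 = ⋯ = ℓ_{m−1} = 0 and ℓ = 0. (Here ∇f × ∇ℓ is the syzygy triple of the 2-form df ∧ dℓ; this is the key lemma showing that {ρ_1,...,ρ_{m−1}, σ^x, σ^y, σ^z} is a minimal generating set of D₀(f).) -/

import Mathlib

open MvPolynomial

noncomputable abbrev S : Type := MvPolynomial (Fin 3) ℂ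

/-- The gradient `∇g = (g_x, g_y, g_z)` of a polynomial `g ∈ S = ℂ[x,y,z]`. -/
noncomputable def grad (g : S) : Fin 3 → S := fun t => pderiv t g

/-- The syzygy triple `ρ_j = Σ_{i≠j} (∏_{k≠i,j} f_k) (∇f_i × ∇f_j)`
of the 2-form `ω_j = df ∧ df_j/f_j`. -/
noncomputable def rho {m : ℕ} (F : Fin m → S) (j : Fin m) : Fin 3 → S :=
  ∑ i ∈ Finset.univ.erase j,
    (∏ k ∈ (Finset.univ.erase j).erase i, F k) • crossProduct (grad (F i)) (grad (F j))

/-- The Jacobian syzygy module `D₀(f) = {(a,b,c) ∈ S³ : a f_x + b f_y + c f_z = 0}`. -/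
noncomputable def D0 (f : S) : Submodule S (Fin 3 → S) where
  carrier := {v | ∑ t, v t * pderiv t f = 0}
  add_mem' {a b} ha hb := by
    simp only [Set.mem_setOf_eq, Pi.add_apply, add_mul, Finset.sum_add_distrib] at *
    rw [ha, hb, add_zero]
  zero_mem' := by simp
  smul_mem' c v hv := by
    simp only [Set.mem_setOf_eq, Pi.smul_apply, smul_eq_mul, mul_assoc, ← Finset.mul_sum] at *
    rw [hv, mul_zero]

/-- The syzygy triple `σ^x = (0, f_z, −f_y)` of the 2-form `df ∧ dx`. -/
noncomputable def sigx (f : S) : Fin 3 → S := ![0, pderiv 2 f, -pderiv 1 f]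
/-- The syzygy triple `σ^y = (−f_z, 0, f_x)` of the 2-form `df ∧ dy`. -/
noncomputable def sigy (f : S) : Fin 3 → S := ![-pderiv 2 f, 0, pderiv 0 f]
/-- The syzygy triple `σ^z = (f_y, −f_x, 0)` of the 2-form `df ∧ dz`. -/
noncomputable def sigz (f : S) : Fin 3 → S := ![pderiv 1 f, -pderiv 0 f, 0]

/-- Divisibility in a UFD, tested against a family without common prime factor. -/
lemma dvd_of_dvd_mul_family {R ι : Type*} [CommRing R] [IsDomain R] [UniqueFactorizationMonoid R]
    (u : ι → R) (c : R) : c ≠ 0 → (∀ q, Prime q → q ∣ c → ∃ t, ¬ q ∣ u t) →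
    ∀ w : R, (∀ t, c ∣ w * u t) → c ∣ w := by
  induction c using UniqueFactorizationMonoid.induction_on_prime with
  | h₁ => intro h; exact absurd rfl h
  | h₂ x hx => intro _ _ w _; exact hx.dvd
  | h₃ a q ha hq ih =>
    intro _ hp w hw
    obtain ⟨t, ht⟩ := hp q hq (dvd_mul_right _ _)
    have h1 : q ∣ w := (hq.dvd_or_dvd ((dvd_mul_right q a).trans (hw t))).resolve_right ht
    obtain ⟨w', rfl⟩ := h1
    apply mul_dvd_mul_left
    refine ih ha (fun r hr hra => hp r hr (hra.mul_left _)) w' (fun t => ?_)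
    have := hw t
    rw [mul_assoc] at this
    exact (mul_dvd_mul_iff_left hq.ne_zero).1 this

/-- A prime polynomial in three variables has a zero other than the origin. -/
lemma exists_zero_of_prime (q : S) (hq : Prime q) : ∃ p : Fin 3 → ℂ, p ≠ 0 ∧ eval p q = 0 := by
  by_contra hcon
  push Not at hcon
  have hP : (Ideal.span {q}).IsPrime := (Ideal.span_singleton_prime hq.ne_zero).2 hq
  have key : ∀ t : Fin 3, q ∣ (X t : S) := by
    intro t
    rw [← Ideal.mem_span_singleton, ← IsPrime.vanishingIdeal_zeroLocus (K := ℂ) (Ideal.span {q}),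
      mem_vanishingIdeal_iff]
    intro x hx
    have h0 : eval x q = 0 := by
      have := mem_zeroLocus_iff.1 hx q (Ideal.mem_span_singleton_self q)
      simpa [aeval_eq_eval] using this
    have : x = 0 := by
      by_contra hne
      exact hcon x hne h0
    simp [this]
  have h01 : (X 0 : S) ∣ X 1 := by
    have hirr : Irreducible (X 0 : S) := X_prime.irreducible
    exact ((hirr.dvd_iff.1 (key 0)).resolve_left hq.not_isUnit).dvd.trans (key 1)
  obtain ⟨r, hr⟩ := h01
  have := congrArg (eval ![0, 1, 0]) hr
  simp at this

lemma eval_dvd_zero {q g : S} {p : Fin 3 → ℂ} (hp : eval p q = 0) (h : q ∣ g) :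
    eval p g = 0 := by
  obtain ⟨r, rfl⟩ := h
  simp [hp]

lemma pderiv_prod_eq {m : ℕ} (F : Fin m → S) (t : Fin 3) :
    pderiv t (∏ i, F i) = ∑ i, (∏ k ∈ Finset.univ.erase i, F k) * pderiv t (F i) := by
  have key : ∀ s : Finset (Fin m), pderiv t (∏ i ∈ s, F i) =
      ∑ i ∈ s, (∏ k ∈ s.erase i, F k) * pderiv t (F i) := by
    intro s
    induction s using Finset.induction_on with
    | empty => simp
    | insert a s ha ih =>
      rw [Finset.prod_insert ha, Derivation.leibniz, Finset.sum_insert ha,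
        Finset.erase_insert ha, ih]
      simp only [smul_eq_mul]
      rw [add_comm, Finset.mul_sum]
      congr 1
      refine Finset.sum_congr rfl fun i hi => ?_
      have hai : a ≠ i := fun h => ha (h ▸ hi)
      rw [Finset.erase_insert_of_ne hai, Finset.prod_insert (by simp [ha]), mul_assoc]
  exact key _

lemma grad_prod_eq {m : ℕ} (F : Fin m → S) :
    grad (∏ i, F i) = ∑ i, (∏ k ∈ Finset.univ.erase i, F k) • grad (F i) := by
  funext t
  simp [grad, pderiv_prod_eq, Finset.sum_apply]

/-- `f ρ_j = ∇f × (P_j ∇f_j)`. -/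
lemma prod_smul_rho {m : ℕ} (F : Fin m → S) (j : Fin m) :
    (∏ i, F i) • rho F j =
      crossProduct (grad (∏ i, F i)) ((∏ k ∈ Finset.univ.erase j, F k) • grad (F j)) := by
  rw [grad_prod_eq, rho, Finset.smul_sum, map_sum, LinearMap.sum_apply,
    ← Finset.add_sum_erase _ _ (Finset.mem_univ j)]
  simp only [map_smul, LinearMap.smul_apply, cross_self, smul_zero, zero_add]
  refine Finset.sum_congr rfl fun i hi => ?_
  rw [smul_smul, smul_smul]
  congr 1
  have hij : j ∈ Finset.univ.erase i := by
    simp only [Finset.mem_erase, Finset.mem_univ, and_true] at hi ⊢; exact hi.symm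
  rw [← Finset.mul_prod_erase _ F (Finset.mem_univ i), ← Finset.mul_prod_erase _ F hij,
    ← Finset.mul_prod_erase _ F hi, Finset.erase_right_comm]
  ring

lemma prime_not_dvd_aux {m : ℕ} (F : Fin m → S)
    (hsmooth : ∀ j, ∀ p : Fin 3 → ℂ,
      (∀ t, eval p (pderiv t (F j)) = 0) → p = 0)
    (hnc : ∀ i j : Fin m, i ≠ j → ∀ p : Fin 3 → ℂ, p ≠ 0 →
      eval p (F i) = 0 → eval p (F j) = 0 →
      LinearIndependent ℂ
        ![fun t => eval p (pderiv t (F i)), fun t => eval p (pderiv t (F j))])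
    (q : S) (hq : Prime q) (i : Fin m) (hi : q ∣ F i) :
    ∃ t, ¬ q ∣ (∏ k ∈ Finset.univ.erase i, F k) * pderiv t (F i) := by
  by_contra hcon
  push Not at hcon
  obtain ⟨p, hp0, hp⟩ := exists_zero_of_prime q hq
  by_cases hP : q ∣ ∏ k ∈ Finset.univ.erase i, F k
  · obtain ⟨j, hj, hqj⟩ := (hq.dvd_finsetProd_iff _).1 hP
    have hij : i ≠ j := (Finset.ne_of_mem_erase hj).symm
    have hlin := hnc i j hij p hp0 (eval_dvd_zero hp hi) (eval_dvd_zero hp hqj)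
    obtain ⟨a, ha⟩ := hi
    obtain ⟨b, hb⟩ := hqj
    rw [LinearIndependent.pair_iff] at hlin
    have hA : ∀ t, eval p (pderiv t (F i)) = eval p a * eval p (pderiv t q) := by
      intro t; rw [ha, pderiv_mul]; simp [hp]; ring
    have hB : ∀ t, eval p (pderiv t (F j)) = eval p b * eval p (pderiv t q) := by
      intro t; rw [hb, pderiv_mul]; simp [hp]; ring
    have h1 := hlin (eval p b) (-eval p a) (by
      funext t
      simp only [Pi.add_apply, Pi.smul_apply, smul_eq_mul, hA, hB, Pi.zero_apply]
      ring)
    have h2 : eval p a = 0 := neg_eq_zero.1 h1.2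
    exact hp0 (hsmooth i p fun t => by rw [hA, h2, zero_mul])
  · exact hp0 (hsmooth i p fun t =>
      eval_dvd_zero hp ((hq.dvd_or_dvd (hcon t)).resolve_left hP))

lemma key_lemma_general {m : ℕ} (F : Fin m → S) (e : Fin m → ℕ)
    (hhom : ∀ j, (F j).IsHomogeneous (e j))
    (hsmooth : ∀ j, ∀ p : Fin 3 → ℂ,
      (∀ t, eval p (pderiv t (F j)) = 0) → p = 0)
    (hnc : ∀ i j : Fin m, i ≠ j → ∀ p : Fin 3 → ℂ, p ≠ 0 →
      eval p (F i) = 0 → eval p (F j) = 0 →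
      LinearIndependent ℂ
        ![fun t => eval p (pderiv t (F i)), fun t => eval p (pderiv t (F j))])
    (hl0 : ∀ j, 2 ≤ e j)
    (M : Fin m → S) (l : S) (i0 : Fin m) (hi0 : M i0 = 0)
    (hM : ∀ j, (M j).IsHomogeneous 1) (hl : l.IsHomogeneous 1)
    (heq : (∑ j, M j • rho F j) + crossProduct (grad (∏ i, F i)) (grad l) = 0) :
    (∀ j, M j = 0) ∧ l = 0 := by
  set f : S := ∏ i, F i with hf
  set P : Fin m → S := fun j => ∏ k ∈ Finset.univ.erase j, F k with hPdef
  have hFP : ∀ j, f = F j * P j := fun j => (Finset.mul_prod_erase _ F (Finset.mem_univ j)).symm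
  have hfhom : f.IsHomogeneous (∑ j, e j) := IsHomogeneous.prod _ _ _ fun j _ => hhom j
  set d := ∑ j, e j with hd
  have hd2 : 2 ≤ d := (hl0 i0).trans
    (Finset.single_le_sum (f := e) (fun _ _ => Nat.zero_le _) (Finset.mem_univ i0))
  have hF0 : ∀ j, F j ≠ 0 := by
    intro j h
    have := hsmooth j (fun _ => 1) (fun t => by simp [h])
    exact one_ne_zero (congrFun this 0)
  have hf0 : f ≠ 0 := Finset.prod_ne_zero_iff.2 fun j _ => hF0 j
  have hv : ∀ t, pderiv t f = ∑ i, P i * pderiv t (F i) := pderiv_prod_eq F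
  have hPdvd : ∀ i j, i ≠ j → F i ∣ P j := fun i j hij =>
    Finset.dvd_prod_of_mem F (by simp [hij])
  -- the gradient of `f` is primitive
  have hprim : ∀ q : S, Prime q → ∃ t, ¬ q ∣ pderiv t f := by
    intro q hq
    by_contra hcon
    push Not at hcon
    have hqf : q ∣ f := by
      have h1 : q ∣ d • f := by
        rw [← hfhom.sum_X_mul_pderiv]
        exact Finset.dvd_sum fun t _ => (hcon t).mul_left _
      have h2 : f = C ((d : ℂ)⁻¹) * (d • f) := by
        have hdC : (d : ℂ) ≠ 0 := by exact_mod_cast (by omega : d ≠ 0)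
        rw [nsmul_eq_mul, ← mul_assoc, ← map_natCast (C : ℂ →+* S) d, ← map_mul,
          inv_mul_cancel₀ hdC, map_one, one_mul]
      rw [h2]
      exact h1.mul_left _
    obtain ⟨i, -, hqi⟩ := (hq.dvd_finsetProd_iff _).1 hqf
    obtain ⟨t, ht⟩ := prime_not_dvd_aux F hsmooth hnc q hq i hqi
    apply ht
    have h3 := hcon t
    rw [hv, ← Finset.add_sum_erase _ _ (Finset.mem_univ i)] at h3
    refine (dvd_add_left ?_).1 h3
    refine Finset.dvd_sum fun j hj => ?_
    exact (hqi.trans (hPdvd i j (Finset.ne_of_mem_erase hj).symm)).mul_right _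
  set w : Fin 3 → S := (∑ j, M j • P j • grad (F j)) + f • grad l with hw
  have hcross : crossProduct (grad f) w = 0 := by
    have h1 : f • ((∑ j, M j • rho F j) + crossProduct (grad f) (grad l)) = 0 := by
      rw [heq, smul_zero]
    rw [hw, map_add, map_sum, ← h1, smul_add, Finset.smul_sum, map_smul]
    congr 1
    refine Finset.sum_congr rfl fun j _ => ?_
    rw [map_smul, smul_comm, prod_smul_rho F j]
  have hcomm : ∀ a b, grad f a * w b = grad f b * w a := by
    rw [cross_apply] at hcross
    have c0 := congrFun hcross 0
    have c1 := congrFun hcross 1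
    have c2 := congrFun hcross 2
    simp at c0 c1 c2
    intro a b
    fin_cases a <;> fin_cases b <;> simp <;>
      first
      | linear_combination c0
      | linear_combination c1
      | linear_combination c2
      | linear_combination -c0
      | linear_combination -c1
      | linear_combination -c2
  obtain ⟨a, ha⟩ := hprim (X 0) X_prime
  have hva : grad f a ≠ 0 := fun h => ha (by
    have hpd : pderiv a f = 0 := h
    rw [hpd]; exact dvd_zero _)
  -- `w = h ∇f`
  have hdvd : grad f a ∣ w a :=
    dvd_of_dvd_mul_family (grad f) (grad f a) hva
      (fun q hq _ => hprim q hq) (w a) (fun t => by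
        rw [mul_comm, ← hcomm a t]; exact dvd_mul_right _ _)
  obtain ⟨h, hh⟩ := hdvd
  have hwv : ∀ t, w t = h * pderiv t f := by
    intro t
    have h1 := hcomm a t
    rw [hh] at h1
    apply mul_left_cancel₀ hva
    rw [h1]
    change grad f t * (grad f a * h) = grad f a * (h * grad f t)
    ring
  have hwt : ∀ t, w t = (∑ j, M j * (P j * pderiv t (F j))) + f * pderiv t l := by
    intro t
    simp [hw, grad, Finset.sum_apply]
  -- degree of `h`
  have hhdeg : h.totalDegree ≤ 1 := by
    by_cases hz : h = 0
    · simp [hz]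
    have hvdeg : (grad f a).totalDegree = d - 1 := (hfhom.pderiv (i := a)).totalDegree hva
    have hwdeg : (w a).totalDegree ≤ d := by
      apply IsHomogeneous.totalDegree_le
      rw [hwt]
      refine IsHomogeneous.add (IsHomogeneous.sum _ _ _ fun j _ => ?_) ?_
      · have hPh : (P j).IsHomogeneous (∑ k ∈ Finset.univ.erase j, e k) :=
          IsHomogeneous.prod _ _ _ fun k _ => hhom k
        have h2 := (hM j).mul (hPh.mul ((hhom j).pderiv (i := a)))
        convert h2 using 1
        have h3 := Finset.add_sum_erase Finset.univ e (Finset.mem_univ j)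
        have h4 := hl0 j
        omega
      · have h2 := hfhom.mul (hl.pderiv (i := a))
        simpa using h2
    rw [hh, totalDegree_mul_of_isDomain hva hz, hvdeg] at hwdeg
    omega
  -- `f_i` divides `h - ℓ_i`
  have hMh : ∀ i, h = M i := by
    intro i
    have hdv : F i ∣ h - M i := by
      refine dvd_of_dvd_mul_family (fun t => P i * pderiv t (F i)) (F i) (hF0 i)
        (fun q hq hqi => prime_not_dvd_aux F hsmooth hnc q hq i hqi) _ (fun t => ?_)
      have h1 := hwv t
      rw [hwt, hv, ← Finset.add_sum_erase _ _ (Finset.mem_univ i),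
        ← Finset.add_sum_erase _ (fun i => P i * pderiv t (F i)) (Finset.mem_univ i)] at h1
      have hd1 : F i ∣ ∑ j ∈ Finset.univ.erase i, M j * (P j * pderiv t (F j)) :=
        Finset.dvd_sum fun j hj =>
          ((hPdvd i j (Finset.ne_of_mem_erase hj).symm).mul_right _).mul_left _
      have hd2 : F i ∣ ∑ j ∈ Finset.univ.erase i, P j * pderiv t (F j) :=
        Finset.dvd_sum fun j hj =>
          ((hPdvd i j (Finset.ne_of_mem_erase hj).symm).mul_right _)
      have hd3 : F i ∣ f := ⟨_, hFP i⟩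
      have h5 : (h - M i) * (P i * pderiv t (F i)) =
          (∑ j ∈ Finset.univ.erase i, M j * (P j * pderiv t (F j))) + f * pderiv t l
            - h * ∑ j ∈ Finset.univ.erase i, P j * pderiv t (F j) := by
        linear_combination -h1
      rw [h5]
      exact dvd_sub (dvd_add hd1 (hd3.mul_right _)) (hd2.mul_left _)
    by_contra hne
    have h1 := totalDegree_le_of_dvd_of_isDomain hdv (sub_ne_zero.2 hne)
    rw [(hhom i).totalDegree (hF0 i)] at h1
    have h2 := totalDegree_sub h (M i)
    have h3 := (hM i).totalDegree_le
    have h4 := hl0 i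
    omega
  have hzero : h = 0 := (hMh i0).trans hi0
  have hMz : ∀ j, M j = 0 := fun j => (hMh j).symm.trans hzero
  refine ⟨hMz, ?_⟩
  have hlt : ∀ t, pderiv t l = 0 := by
    intro t
    have h1 := hwt t
    rw [hwv t, hzero] at h1
    simp only [hMz, zero_mul, Finset.sum_const_zero, zero_add] at h1
    exact (mul_eq_zero.1 h1.symm).resolve_left hf0
  have h1 := hl.sum_X_mul_pderiv
  simpa [hlt] using h1.symm

/-- if `ℓ(C) = 0` (all `e_j ≥ 2`) and `ℓ_1, …, ℓ_{m−1}, ℓ` are homogeneous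
linear forms (possibly zero) with `Σ_{j=1}^{m−1} ℓ_j ρ_j + ∇f × ∇ℓ = 0` in `S³`, then all
`ℓ_j = 0` and `ℓ = 0`. -/
theorem key_lemma_caseL0
    (m : ℕ) (hm : 4 ≤ m) (F : Fin m → S) (e : Fin m → ℕ)
    (he : ∀ j, 1 ≤ e j)
    (hhom : ∀ j, (F j).IsHomogeneous (e j))
    (hsmooth : ∀ j, ∀ p : Fin 3 → ℂ,
      (∀ t, eval p (pderiv t (F j)) = 0) → p = 0)
    (hnc : ∀ i j : Fin m, i ≠ j → ∀ p : Fin 3 → ℂ, p ≠ 0 →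
      eval p (F i) = 0 → eval p (F j) = 0 →
      LinearIndependent ℂ
        ![fun t => eval p (pderiv t (F i)), fun t => eval p (pderiv t (F j))])
    (htriple : ∀ i j k : Fin m, i ≠ j → i ≠ k → j ≠ k → ∀ p : Fin 3 → ℂ, p ≠ 0 →
      ¬(eval p (F i) = 0 ∧ eval p (F j) = 0 ∧ eval p (F k) = 0))
    (hl0 : ∀ j, 2 ≤ e j)
    (L : Fin (m - 1) → S) (l : S)
    (hL : ∀ j, (L j).IsHomogeneous 1) (hl : l.IsHomogeneous 1)
    (heq : (∑ j : Fin (m - 1), L j • rho F (Fin.castLE (Nat.sub_le m 1) j))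
        + crossProduct (grad (∏ i, F i)) (grad l) = 0) :
    (∀ j, L j = 0) ∧ l = 0 := by
  obtain ⟨n, rfl⟩ : ∃ n, m = n + 1 := ⟨m - 1, by omega⟩
  have key := key_lemma_general F e hhom hsmooth hnc hl0
    (Fin.snoc (α := fun _ => S) (fun j : Fin n => L j) 0) l (Fin.last n) (by simp)
    (fun j => by
      induction j using Fin.lastCases with
      | last => simpa using isHomogeneous_zero (Fin 3) ℂ 1
      | cast j => simpa using hL j) hl
    (by
      rw [Fin.sum_univ_castSucc]
      simp only [Fin.snoc_castSucc, Fin.snoc_last, zero_smul, add_zero]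
      exact heq)
  refine ⟨fun j => ?_, key.2⟩
  have := key.1 (Fin.castSucc (n := n) j)
  rwa [Fin.snoc_castSucc] at this
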